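/- Let φ, ψ : [0,1] → ℝ be smooth, let e₁ = (1,0,…,0) ∈ ℝⁿ, let μ > 0, and let g ∈ C₀^∞(ℝⁿ × [0,1]). Then for all sufficiently large R > 0, ∫∫ [ ψ''(t) − (R⁴/(32μ)) (φ''(t))² ] e^{2ψ(t)} e^{2μ|x/R − φ(t)e₁|²} |g|² dx dt ≤ ∫∫ e^{2ψ(t)} e^{2μ|x/R − φ(t)e₁|²} |(i∂ₜ + Δ)g|² dx dt. -/

import Mathlib

open MeasureTheory Metric Set Filter
open scoped ENNReal NNReal Topology

/-- The Laplacian of a complex-valued function on `ℝⁿ`. -/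
noncomputable def lapl {n : ℕ} (f : EuclideanSpace ℝ (Fin n) → ℂ)
    (x : EuclideanSpace ℝ (Fin n)) : ℂ :=
  ∑ i, fderiv ℝ (fun y => fderiv ℝ f y (EuclideanSpace.single i 1)) x (EuclideanSpace.single i 1)

/-!
Conjugating `i∂ₜ + Δ` with `exp θ` gives `S + A` with `S` symmetric and `A` skew-symmetric, so that
`f = exp θ • g` satisfies `|exp θ • (i∂ₜ + Δ)g|² = |Sf + Af|² ≥ 2 Re⟪Sf, Af⟫`. The right-hand side
integrates to the quadratic form of the commutator `[S, A]`. For `θ = ψ + μ|y|²`, where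
`y = x/R - b(t)`, the density of this form is
`(ψ'' - 2μ y·b'' + 32μ³R⁻⁴|y|²)|f|² + 8μ|R⁻¹∇f - (i/2)b'f|²`,
and completing the square in `y` costs exactly `R⁴/(32μ)|b''|²`.
-/

open InnerProductSpace
open scoped ContDiff Laplacian

section DirDeriv

variable {E F : Type*} [NormedAddCommGroup E] [NormedSpace ℝ E]
  [NormedAddCommGroup F] [NormedSpace ℝ F]

/-- The derivative of `f` in the fixed direction `v`, as an operator on functions, so that it can be
iterated. It is written `∂[v] f`. -/
noncomputable def dirDeriv (v : E) (f : E → F) (z : E) : F := fderiv ℝ f z v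

local notation "∂[" v "]" => dirDeriv v

attribute [fun_prop] ContDiff.inner Differentiable.inner

@[fun_prop]
lemma differentiable_of_contDiff_infty {f : E → F} (hf : ContDiff ℝ ∞ f) : Differentiable ℝ f :=
  hf.differentiable (by simp)

@[fun_prop]
lemma contDiff_dirDeriv {f : E → F} (hf : ContDiff ℝ ∞ f) (v : E) : ContDiff ℝ ∞ (∂[v] f) := by
  unfold dirDeriv
  fun_prop

lemma dirDeriv_eq_zero_of_notMem_tsupport {f : E → F} {z : E} (hz : z ∉ tsupport f) (v : E) :
    ∂[v] f z = 0 :=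
  image_eq_zero_of_notMem_tsupport fun h => hz (tsupport_fderiv_apply_subset ℝ v h)

lemma dirDeriv_dirDeriv {f : E → F} (hf : ContDiff ℝ 2 f) (v w z : E) :
    ∂[v] (∂[w] f) z = fderiv ℝ (fderiv ℝ f) z v w := by
  have hf' : DifferentiableAt ℝ (fderiv ℝ f) z :=
    (hf.fderiv_right (m := 1) (by norm_num)).differentiable one_ne_zero z
  change fderiv ℝ (fun z => fderiv ℝ f z w) z v = _
  simp [fderiv_clm_apply hf' (differentiableAt_const w)]

lemma dirDeriv_comm {f : E → F} (hf : ContDiff ℝ 2 f) (v w : E) :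
    ∂[v] (∂[w] f) = ∂[w] (∂[v] f) := by
  ext z
  rw [dirDeriv_dirDeriv hf, dirDeriv_dirDeriv hf, (hf.contDiffAt.isSymmSndFDerivAt (by simp)).eq]

@[simp]
lemma dirDeriv_const (v : E) (c : F) : ∂[v] (fun _ => c) = 0 := by
  ext z
  simp [dirDeriv]

lemma dirDeriv_add {f g : E → F} (hf : Differentiable ℝ f) (hg : Differentiable ℝ g) (v : E) :
    ∂[v] (fun z => f z + g z) = fun z => ∂[v] f z + ∂[v] g z := by
  ext z
  simp [dirDeriv, fderiv_fun_add (hf z) (hg z)]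

lemma dirDeriv_sum {ι : Type*} [Fintype ι] {f : ι → E → F} (hf : ∀ i, Differentiable ℝ (f i))
    (v : E) : ∂[v] (fun z => ∑ i, f i z) = fun z => ∑ i, ∂[v] (f i) z := by
  ext z
  simp [dirDeriv, fderiv_fun_sum fun i _ => hf i z]

lemma dirDeriv_smul {f : E → ℝ} {g : E → F} (hf : Differentiable ℝ f) (hg : Differentiable ℝ g)
    (v : E) : ∂[v] (fun z => f z • g z) = fun z => f z • ∂[v] g z + ∂[v] f z • g z := by
  ext z
  simp [dirDeriv, fderiv_fun_smul (hf z) (hg z)]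

lemma dirDeriv_exp {f : E → ℝ} (hf : Differentiable ℝ f) (v : E) :
    ∂[v] (fun z => Real.exp (f z)) = fun z => Real.exp (f z) * ∂[v] f z := by
  ext z
  simp [dirDeriv, fderiv_exp (hf z)]

lemma dirDeriv_inner {H : Type*} [NormedAddCommGroup H] [InnerProductSpace ℝ H] {f g : E → H}
    (hf : Differentiable ℝ f) (hg : Differentiable ℝ g) (v : E) :
    ∂[v] (fun z => ⟪f z, g z⟫_ℝ) = fun z => ⟪f z, ∂[v] g z⟫_ℝ + ⟪∂[v] f z, g z⟫_ℝ := by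
  ext z
  exact fderiv_inner_apply ℝ (hf z) (hg z) v

/-! ### Integration by parts modulo divergences -/

/-- The space of functions spanned by the directional derivatives of smooth compactly supported
functions. Two functions congruent modulo it differ by integrations by parts. -/
def compactDivergence (E : Type*) [NormedAddCommGroup E] [NormedSpace ℝ E] :
    Submodule ℝ (E → ℝ) :=
  Submodule.span ℝ {T | ∃ (v : E) (N : E → ℝ), ContDiff ℝ ∞ N ∧ HasCompactSupport N ∧ ∂[v] N = T}

lemma mul_inner_leibniz_mem_compactDivergence {H : Type*} [NormedAddCommGroup H]
    [InnerProductSpace ℝ H] {w : E → ℝ} {a b : E → H} (hw : ContDiff ℝ ∞ w) (ha : ContDiff ℝ ∞ a)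
    (hb : ContDiff ℝ ∞ b) (ha_supp : HasCompactSupport a) (v : E) :
    (fun z => w z * (⟪a z, ∂[v] b z⟫_ℝ + ⟪∂[v] a z, b z⟫_ℝ) + ∂[v] w z * ⟪a z, b z⟫_ℝ) ∈
      compactDivergence E := by
  refine Submodule.subset_span ⟨v, fun z => w z • ⟪a z, b z⟫_ℝ, by fun_prop, ?_, ?_⟩
  · exact ha_supp.mono' fun z hz => subset_tsupport a fun haz => hz (by simp [haz])
  · rw [dirDeriv_smul (by fun_prop) (by fun_prop), dirDeriv_inner (by fun_prop) (by fun_prop)]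
    rfl

section Integral

variable [FiniteDimensional ℝ E] [MeasurableSpace E] [BorelSpace E] (ν : Measure E)
  [ν.IsAddHaarMeasure]

lemma integral_dirDeriv_eq_zero {N : E → F} (hN : ContDiff ℝ 1 N) (hN_supp : HasCompactSupport N)
    (v : E) : ∫ z, ∂[v] N z ∂ν = 0 := by
  have hN'_int : Integrable (∂[v] N) ν :=
    (show Continuous (∂[v] N) by unfold dirDeriv; fun_prop (disch := norm_num))
      |>.integrable_of_hasCompactSupport (hN_supp.fderiv_apply ℝ v)
  have hN_int : Integrable N ν := hN.continuous.integrable_of_hasCompactSupport hN_supp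
  simpa using! integral_smul_fderiv_eq_neg_fderiv_smul_of_integrable (μ := ν) (v := v)
    (f := fun _ : E => (1 : ℝ)) (g := N) (by simp) (by simpa using! hN'_int)
    (by simpa using hN_int) (by simp) fun z _ => hN.differentiable one_ne_zero z

lemma integrable_and_integral_eq_zero_of_mem_compactDivergence {T : E → ℝ}
    (hT : T ∈ compactDivergence E) : Integrable T ν ∧ ∫ z, T z ∂ν = 0 := by
  induction hT using Submodule.span_induction with
  | mem T hT =>
    obtain ⟨v, N, hN, hN_supp, rfl⟩ := hT
    exact ⟨(contDiff_dirDeriv hN v).continuous.integrable_of_hasCompactSupport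
      (hN_supp.fderiv_apply ℝ v), integral_dirDeriv_eq_zero ν (hN.of_le (by simp)) hN_supp v⟩
  | zero => simp
  | add S T _ _ hS hT => exact ⟨hS.1.add hT.1, by simp [integral_add hS.1 hT.1, hS.2, hT.2]⟩
  | smul c T _ hT => exact ⟨hT.1.smul c, by simp [integral_const_mul, hT.2]⟩

lemma integrable_of_smodEq {S T : E → ℝ} (hST : S ≡ T [SMOD compactDivergence E])
    (hS : Integrable S ν) : Integrable T ν := by
  simpa using hS.sub
    (integrable_and_integral_eq_zero_of_mem_compactDivergence ν (SModEq.sub_mem.1 hST)).1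

lemma integral_eq_of_smodEq {S T : E → ℝ} (hST : S ≡ T [SMOD compactDivergence E])
    (hS : Integrable S ν) : ∫ z, S z ∂ν = ∫ z, T z ∂ν := by
  rw [← sub_eq_zero, ← integral_sub hS (integrable_of_smodEq ν hST hS)]
  exact (integrable_and_integral_eq_zero_of_mem_compactDivergence ν (SModEq.sub_mem.1 hST)).2

end Integral

/-! ### The conjugated Schrödinger operator and its commutator -/

lemma dirDeriv_const_mul {f : E → ℂ} (hf : Differentiable ℝ f) (c : ℂ) (v : E) :
    ∂[v] (fun z => c * f z) = fun z => c * ∂[v] f z := by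
  ext z
  simp [dirDeriv, fderiv_const_mul (hf z)]

lemma inner_I_mul_I_mul (a b : ℂ) : ⟪Complex.I * a, Complex.I * b⟫_ℝ = ⟪a, b⟫_ℝ := by
  simp [Complex.inner, Complex.mul_re]

lemma inner_I_mul_antisymm (a b : ℂ) : ⟪Complex.I * a, b⟫_ℝ = -⟪Complex.I * b, a⟫_ℝ := by
  rw [← inner_I_mul_I_mul, ← mul_assoc, Complex.I_mul_I, neg_one_mul, inner_neg_left,
    real_inner_comm]

/-- The formally skew-adjoint first order operator `-(2 ∂ᵥθ ∂ᵥ + ∂ᵥ²θ)`, which is what conjugating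
`∂ᵥ²` with `exp θ` produces besides the self-adjoint part `∂ᵥ² + (∂ᵥθ)²`. -/
noncomputable def transport (v : E) (θ : E → ℝ) (f : E → ℂ) (z : E) : ℂ :=
  -((2 * ∂[v] θ z) • ∂[v] f z + ∂[v] (∂[v] θ) z • f z)

section Commutator

variable {θ : E → ℝ} {f : E → ℂ}

lemma inner_time_time_smodEq (hθ : ContDiff ℝ ∞ θ) (hf : ContDiff ℝ ∞ f)
    (hf_supp : HasCompactSupport f) (τ : E) :
    (fun z => 2 * ⟪Complex.I * ∂[τ] f z, -(Complex.I * ∂[τ] θ z • f z)⟫_ℝ)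
      ≡ fun z => ∂[τ] (∂[τ] θ) z * ‖f z‖ ^ 2 [SMOD compactDivergence E] := by
  rw [SModEq.sub_mem]
  have h := mul_inner_leibniz_mem_compactDivergence (contDiff_dirDeriv hθ τ) hf hf hf_supp τ
  convert Submodule.smul_mem _ (-1) h using 1
  ext z
  simp only [Pi.sub_apply, Pi.smul_apply, smul_eq_mul, ← real_inner_self_eq_norm_sq,
    mul_smul_comm, inner_neg_right, real_inner_smul_right, inner_I_mul_I_mul]
  linear_combination ∂[τ] θ z * real_inner_comm (∂[τ] f z) (f z)

lemma inner_time_space_smodEq (hθ : ContDiff ℝ ∞ θ) (hf : ContDiff ℝ ∞ f)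
    (hf_supp : HasCompactSupport f) (τ v : E) :
    (fun z => 2 * ⟪Complex.I * ∂[τ] f z, transport v θ f z⟫_ℝ
        + 2 * ⟪∂[v] (∂[v] f) z, -(Complex.I * ∂[τ] θ z • f z)⟫_ℝ)
      ≡ fun z => -(4 * ∂[v] (∂[τ] θ) z * ⟪Complex.I * ∂[v] f z, f z⟫_ℝ)
        [SMOD compactDivergence E] := by
  rw [SModEq.sub_mem]
  have hIfτ : ContDiff ℝ ∞ fun z => Complex.I * ∂[τ] f z := by fun_prop
  have hIfv : ContDiff ℝ ∞ fun z => Complex.I * ∂[v] f z := by fun_prop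
  have hIfτ_supp : HasCompactSupport fun z => Complex.I * ∂[τ] f z :=
    (hf_supp.fderiv_apply ℝ τ).mul_left
  have hIfv_supp : HasCompactSupport fun z => Complex.I * ∂[v] f z :=
    (hf_supp.fderiv_apply ℝ v).mul_left
  have h₁ := mul_inner_leibniz_mem_compactDivergence (contDiff_dirDeriv hθ v) hIfτ hf hIfτ_supp v
  have h₂ := mul_inner_leibniz_mem_compactDivergence (contDiff_dirDeriv hθ v) hIfv hf hIfv_supp τ
  have h₃ := mul_inner_leibniz_mem_compactDivergence (contDiff_dirDeriv hθ τ) hIfv hf hIfv_supp v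
  convert add_mem (add_mem (Submodule.smul_mem _ (-2) h₁) (Submodule.smul_mem _ 2 h₂))
    (Submodule.smul_mem _ 2 h₃) using 1
  ext z
  have hθ_comm := dirDeriv_comm (contDiff_infty.1 hθ 2) τ v
  have hf_comm := dirDeriv_comm (contDiff_infty.1 hf 2) τ v
  simp only [dirDeriv_const_mul (differentiable_of_contDiff_infty (contDiff_dirDeriv hf _)),
    hθ_comm, hf_comm, transport, Pi.sub_apply, Pi.add_apply, Pi.smul_apply, smul_eq_mul,
    mul_smul_comm, inner_neg_right, inner_add_right, real_inner_smul_right]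
  linear_combination
    -2 * ∂[v] θ z * inner_I_mul_antisymm (∂[v] f z) (∂[τ] f z)
    - ∂[τ] θ z * inner_I_mul_antisymm (∂[v] f z) (∂[v] f z)
    - 2 * ∂[τ] θ z * inner_I_mul_antisymm (∂[v] (∂[v] f) z) (f z)
    - 2 * ∂[τ] θ z * real_inner_comm (Complex.I * f z) (∂[v] (∂[v] f) z)

lemma inner_space_space_smodEq (hθ : ContDiff ℝ ∞ θ) (hf : ContDiff ℝ ∞ f)
    (hf_supp : HasCompactSupport f) (v w : E) :
    (fun z => 2 * ⟪∂[v] (∂[v] f) z, transport w θ f z⟫_ℝ)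
      ≡ fun z => 4 * ∂[v] (∂[w] θ) z * ⟪∂[v] f z, ∂[w] f z⟫_ℝ
        - ∂[v] (∂[v] (∂[w] (∂[w] θ))) z * ‖f z‖ ^ 2 [SMOD compactDivergence E] := by
  rw [SModEq.sub_mem]
  have hfv : ContDiff ℝ ∞ (∂[v] f) := by fun_prop
  have hfw : ContDiff ℝ ∞ (∂[w] f) := by fun_prop
  have hfv_supp : HasCompactSupport (∂[v] f) := hf_supp.fderiv_apply ℝ v
  have h₁ := mul_inner_leibniz_mem_compactDivergence (contDiff_dirDeriv hθ w) hfv hfw hfv_supp v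
  have h₂ := mul_inner_leibniz_mem_compactDivergence (contDiff_dirDeriv hθ w) hfv hfv hfv_supp w
  have h₃ := mul_inner_leibniz_mem_compactDivergence
    (contDiff_dirDeriv (contDiff_dirDeriv hθ w) w) hfv hf hfv_supp v
  have h₄ := mul_inner_leibniz_mem_compactDivergence
    (contDiff_dirDeriv (contDiff_dirDeriv (contDiff_dirDeriv hθ w) w) v) hf hf hf_supp v
  convert add_mem (add_mem (Submodule.smul_mem _ (-4) h₁) (Submodule.smul_mem _ 2 h₂))
    (add_mem (Submodule.smul_mem _ (-2) h₃) h₄) using 1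
  ext z
  have hf_comm := dirDeriv_comm (contDiff_infty.1 hf 2) w v
  simp only [hf_comm, transport, Pi.sub_apply, Pi.add_apply, Pi.smul_apply, smul_eq_mul,
    ← real_inner_self_eq_norm_sq, inner_neg_right, inner_add_right, real_inner_smul_right]
  linear_combination
    2 * ∂[w] θ z * real_inner_comm (∂[v] (∂[w] f) z) (∂[v] f z)
    + ∂[v] (∂[w] (∂[w] θ)) z * real_inner_comm (f z) (∂[v] f z)

lemma inner_potential_space_smodEq {V : E → ℝ} (hθ : ContDiff ℝ ∞ θ) (hV : ContDiff ℝ ∞ V)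
    (hf : ContDiff ℝ ∞ f) (hf_supp : HasCompactSupport f) (v : E) :
    (fun z => 2 * ⟪V z • f z, transport v θ f z⟫_ℝ)
      ≡ fun z => 2 * ∂[v] V z * ∂[v] θ z * ‖f z‖ ^ 2 [SMOD compactDivergence E] := by
  rw [SModEq.sub_mem]
  have hVθ : ContDiff ℝ ∞ fun z => V z * ∂[v] θ z := by fun_prop
  have h := mul_inner_leibniz_mem_compactDivergence hVθ hf hf hf_supp v
  convert Submodule.smul_mem _ (-2) h using 1
  ext z
  have hVθ' : ∂[v] (fun z => V z * ∂[v] θ z) = _ :=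
    dirDeriv_smul (differentiable_of_contDiff_infty hV) (by fun_prop) v
  simp only [hVθ', transport, Pi.sub_apply, Pi.smul_apply, smul_eq_mul, inner_neg_right,
    ← real_inner_self_eq_norm_sq, inner_add_right, real_inner_smul_right, real_inner_smul_left]
  linear_combination 2 * V z * ∂[v] θ z * real_inner_comm (f z) (∂[v] f z)

end Commutator

section Schrodinger

variable {ι : Type*} [Fintype ι] (τ : E) (e : ι → E)

/-- The Schrödinger operator `i∂ₜ + Δ` with time direction `τ` and spatial frame `e`. -/
noncomputable def schrodinger (g : E → ℂ) (z : E) : ℂ :=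
  Complex.I * ∂[τ] g z + ∑ j, ∂[e j] (∂[e j] g) z

/-- The formally self-adjoint part of `exp θ ∘ schrodinger τ e ∘ exp (-θ)`. -/
noncomputable def symmPart (θ : E → ℝ) (f : E → ℂ) (z : E) : ℂ :=
  Complex.I * ∂[τ] f z + ∑ j, ∂[e j] (∂[e j] f) z + (∑ j, ∂[e j] θ z ^ 2) • f z

/-- The formally skew-adjoint part of `exp θ ∘ schrodinger τ e ∘ exp (-θ)`. -/
noncomputable def skewPart (θ : E → ℝ) (f : E → ℂ) (z : E) : ℂ :=
  ∑ j, transport (e j) θ f z - Complex.I * ∂[τ] θ z • f z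

/-- The density of the quadratic form of the commutator `[S, A]` of `S = symmPart τ e θ` and
`A = skewPart τ e θ`, i.e. the form that represents `2 Re⟪S f, A f⟫` modulo divergences. -/
noncomputable def commutatorForm (θ : E → ℝ) (f : E → ℂ) (z : E) : ℝ :=
  ∂[τ] (∂[τ] θ) z * ‖f z‖ ^ 2
    - ∑ j, 4 * ∂[e j] (∂[τ] θ) z * ⟪Complex.I * ∂[e j] f z, f z⟫_ℝ
    + ∑ j, ∑ k, (4 * ∂[e j] (∂[e k] θ) z * ⟪∂[e j] f z, ∂[e k] f z⟫_ℝ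
      + (4 * ∂[e j] θ z * ∂[e k] θ z * ∂[e j] (∂[e k] θ) z
        - ∂[e j] (∂[e j] (∂[e k] (∂[e k] θ))) z) * ‖f z‖ ^ 2)

variable {θ : E → ℝ} {f g : E → ℂ}

lemma schrodinger_eq_zero_of_notMem_tsupport {z : E} (hz : z ∉ tsupport g) :
    schrodinger τ e g z = 0 := by
  have h (v : E) : z ∉ tsupport (∂[v] g) := fun h => hz (tsupport_fderiv_apply_subset ℝ v h)
  simp [schrodinger, dirDeriv_eq_zero_of_notMem_tsupport hz,
    dirDeriv_eq_zero_of_notMem_tsupport (h _)]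

lemma dirDeriv_sum_sq {u : ι → E → ℝ} (hu : ∀ j, Differentiable ℝ (u j)) (v : E) :
    ∂[v] (fun z => ∑ j, u j z ^ 2) = fun z => ∑ j, 2 * u j z * ∂[v] (u j) z := by
  rw [dirDeriv_sum fun j => (hu j).fun_pow 2]
  ext z
  exact Finset.sum_congr rfl fun j _ => by simp [dirDeriv, fderiv_fun_pow 2 (hu j z)]

lemma inner_symmPart_skewPart_smodEq (hθ : ContDiff ℝ ∞ θ) (hf : ContDiff ℝ ∞ f)
    (hf_supp : HasCompactSupport f) :
    (fun z => 2 * ⟪symmPart τ e θ f z, skewPart τ e θ f z⟫_ℝ) ≡ commutatorForm τ e θ f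
      [SMOD compactDivergence E] := by
  have hV : ContDiff ℝ ∞ fun z => ∑ j, ∂[e j] θ z ^ 2 := by fun_prop
  have h_time := inner_time_time_smodEq hθ hf hf_supp τ
  have h_mixed := SModEq.sum (s := Finset.univ)
    fun j _ => inner_time_space_smodEq hθ hf hf_supp τ (e j)
  have h_space := SModEq.sum (s := Finset.univ) fun j _ =>
    SModEq.sum (s := Finset.univ) fun k _ => inner_space_space_smodEq hθ hf hf_supp (e j) (e k)
  have h_potential := SModEq.sum (s := Finset.univ)
    fun k _ => inner_potential_space_smodEq hθ hV hf hf_supp (e k)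
  convert ((h_time.add h_mixed).add h_space).add h_potential using 1
  · ext z
    have h_zero : ⟪f z, Complex.I * f z⟫_ℝ = 0 := by
      linarith [inner_I_mul_antisymm (f z) (f z), real_inner_comm (f z) (Complex.I * f z)]
    simp only [symmPart, skewPart, Pi.add_apply, Finset.sum_apply, inner_add_left, sub_eq_add_neg,
      inner_add_right, sum_inner, inner_sum, Finset.sum_add_distrib, ← Finset.mul_sum,
      inner_neg_right, mul_smul_comm, real_inner_smul_left, real_inner_smul_right, h_zero, mul_neg,
      Finset.sum_neg_distrib]
    rw [Finset.sum_comm]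
    ring
  · ext z
    have h_grad (k : ι) : 2 * ∂[e k] (fun z => ∑ j, ∂[e j] θ z ^ 2) z * ∂[e k] θ z * ‖f z‖ ^ 2
        = ∑ j, 4 * ∂[e k] θ z * ∂[e j] θ z * ∂[e k] (∂[e j] θ) z * ‖f z‖ ^ 2 := by
      simp only [dirDeriv_sum_sq fun j => differentiable_of_contDiff_infty
        (contDiff_dirDeriv hθ (e j)), Finset.mul_sum, Finset.sum_mul]
      exact Finset.sum_congr rfl fun j _ => by ring
    simp only [commutatorForm, Pi.add_apply, Finset.sum_apply, h_grad, Finset.sum_add_distrib,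
      Finset.sum_sub_distrib, Finset.sum_neg_distrib, sub_mul]
    ring

lemma exp_smul_dirDeriv (hθ : Differentiable ℝ θ) (hg : Differentiable ℝ g) (v : E) (z : E) :
    Real.exp (θ z) • ∂[v] g z
      = ∂[v] (fun z => Real.exp (θ z) • g z) z - ∂[v] θ z • Real.exp (θ z) • g z := by
  rw [dirDeriv_smul hθ.exp hg, dirDeriv_exp hθ]
  module

lemma exp_smul_dirDeriv_dirDeriv (hθ : ContDiff ℝ ∞ θ) (hg : ContDiff ℝ ∞ g) (v : E) (z : E) :
    Real.exp (θ z) • ∂[v] (∂[v] g) z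
      = ∂[v] (∂[v] fun z => Real.exp (θ z) • g z) z + ∂[v] θ z ^ 2 • (Real.exp (θ z) • g z)
        + transport v θ (fun z => Real.exp (θ z) • g z) z := by
  set f := fun z => Real.exp (θ z) • g z
  have h_exp (z : E) : Real.exp (θ z) • ∂[v] g z = ∂[v] f z - ∂[v] θ z • f z :=
    exp_smul_dirDeriv (by fun_prop) (by fun_prop) v z
  have h_fst : ∂[v] f = fun z => Real.exp (θ z) • ∂[v] g z + ∂[v] θ z • f z := by
    ext z
    rw [h_exp, sub_add_cancel]
  have h_snd : ∂[v] (∂[v] f) z = Real.exp (θ z) • ∂[v] (∂[v] g) z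
      + (Real.exp (θ z) * ∂[v] θ z) • ∂[v] g z + ∂[v] θ z • ∂[v] f z
      + ∂[v] (∂[v] θ) z • f z := by
    conv_lhs => rw [h_fst]
    rw [dirDeriv_add (by fun_prop) (by fun_prop), dirDeriv_smul (by fun_prop) (by fun_prop),
      dirDeriv_smul (by fun_prop) (by fun_prop), dirDeriv_exp (by fun_prop)]
    module
  rw [h_snd, transport, mul_comm (Real.exp _), mul_smul, h_exp]
  module

lemma exp_smul_schrodinger (hθ : ContDiff ℝ ∞ θ) (hg : ContDiff ℝ ∞ g) (z : E) :
    Real.exp (θ z) • schrodinger τ e g z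
      = symmPart τ e θ (fun z => Real.exp (θ z) • g z) z
        + skewPart τ e θ (fun z => Real.exp (θ z) • g z) z := by
  simp only [schrodinger, symmPart, skewPart, smul_add, Finset.smul_sum, Finset.sum_smul,
    exp_smul_dirDeriv_dirDeriv hθ hg, ← mul_smul_comm, Finset.sum_add_distrib,
    exp_smul_dirDeriv (differentiable_of_contDiff_infty hθ) (differentiable_of_contDiff_infty hg)]
  ring

/-! ### The abstract Carleman inequality -/

lemma two_mul_inner_le_norm_add_sq {H : Type*} [NormedAddCommGroup H] [InnerProductSpace ℝ H]
    (a b : H) : 2 * ⟪a, b⟫_ℝ ≤ ‖a + b‖ ^ 2 := by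
  rw [norm_add_sq_real]
  linarith [sq_nonneg ‖a‖, sq_nonneg ‖b‖]

section Integrable

variable [MeasurableSpace E] [OpensMeasurableSpace E] (ν : Measure E)
  [IsFiniteMeasureOnCompacts ν]

lemma integrable_inner_symmPart_skewPart (hθ : ContDiff ℝ ∞ θ) (hf : ContDiff ℝ ∞ f)
    (hf_supp : HasCompactSupport f) :
    Integrable (fun z => 2 * ⟪symmPart τ e θ f z, skewPart τ e θ f z⟫_ℝ) ν := by
  have h_smooth : ContDiff ℝ ∞ fun z => 2 * ⟪symmPart τ e θ f z, skewPart τ e θ f z⟫_ℝ := by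
    unfold symmPart skewPart transport
    fun_prop
  refine h_smooth.continuous.integrable_of_hasCompactSupport (.intro hf_supp fun z hz => ?_)
  simp [skewPart, transport, image_eq_zero_of_notMem_tsupport hz,
    dirDeriv_eq_zero_of_notMem_tsupport hz]

lemma integrable_norm_exp_smul_schrodinger_sq (hθ : ContDiff ℝ ∞ θ) (hg : ContDiff ℝ ∞ g)
    (hg_supp : HasCompactSupport g) :
    Integrable (fun z => ‖Real.exp (θ z) • schrodinger τ e g z‖ ^ 2) ν := by
  have h_smooth : ContDiff ℝ ∞ (schrodinger τ e g) := by unfold schrodinger; fun_prop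
  have h_cont : Continuous fun z => ‖Real.exp (θ z) • schrodinger τ e g z‖ ^ 2 := by
    fun_prop
  refine h_cont.integrable_of_hasCompactSupport (.intro hg_supp fun z hz => ?_)
  simp [schrodinger_eq_zero_of_notMem_tsupport τ e hz]

end Integrable

section Integral

variable [FiniteDimensional ℝ E] [MeasurableSpace E] [BorelSpace E] (ν : Measure E)
  [ν.IsAddHaarMeasure]

lemma integrable_commutatorForm (hθ : ContDiff ℝ ∞ θ) (hf : ContDiff ℝ ∞ f)
    (hf_supp : HasCompactSupport f) : Integrable (commutatorForm τ e θ f) ν :=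
  integrable_of_smodEq ν (inner_symmPart_skewPart_smodEq τ e hθ hf hf_supp)
    (integrable_inner_symmPart_skewPart τ e ν hθ hf hf_supp)

theorem integral_commutatorForm_le (hθ : ContDiff ℝ ∞ θ) (hg : ContDiff ℝ ∞ g)
    (hg_supp : HasCompactSupport g) :
    ∫ z, commutatorForm τ e θ (fun z => Real.exp (θ z) • g z) z ∂ν
      ≤ ∫ z, ‖Real.exp (θ z) • schrodinger τ e g z‖ ^ 2 ∂ν := by
  set f := fun z => Real.exp (θ z) • g z with hf_def
  have hf : ContDiff ℝ ∞ f := by unfold f; fun_prop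
  have hf_supp : HasCompactSupport f := hg_supp.smul_left (f := fun z => Real.exp (θ z))
  have h_int := integrable_inner_symmPart_skewPart τ e ν hθ hf hf_supp
  rw [← integral_eq_of_smodEq ν (inner_symmPart_skewPart_smodEq τ e hθ hf hf_supp) h_int]
  refine integral_mono h_int
    (integrable_norm_exp_smul_schrodinger_sq τ e ν hθ hg hg_supp) fun z => ?_
  rw [exp_smul_schrodinger τ e hθ hg, ← hf_def]
  exact two_mul_inner_le_norm_add_sq _ _

end Integral

end Schrodinger

/-! ### The moving Gaussian phase -/

section MovingGaussian

variable {X : Type*} [NormedAddCommGroup X] [InnerProductSpace ℝ X]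

/-- The position relative to a moving centre: the point `x / R - b(t)` of `X`, as a function of
`(x, t)`. -/
noncomputable def movingFrame (R : ℝ) (b : ℝ → X) (z : X × ℝ) : X := R⁻¹ • z.1 - b z.2

/-- The logarithm `ψ(t) + μ|x/R - b(t)|²` of the square root of the Carleman weight. -/
noncomputable def gaussianPhase (μ R : ℝ) (b : ℝ → X) (ψ : ℝ → ℝ) (z : X × ℝ) : ℝ :=
  ψ z.2 + μ • ⟪movingFrame R b z, movingFrame R b z⟫_ℝ

variable {μ R : ℝ} {b : ℝ → X} {ψ : ℝ → ℝ}

lemma contDiff_gaussianPhase (hψ : ContDiff ℝ ∞ ψ) (hb : ContDiff ℝ ∞ b) :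
    ContDiff ℝ ∞ (gaussianPhase μ R b ψ) := by
  unfold gaussianPhase movingFrame
  fun_prop

lemma dirDeriv_comp_snd {c : ℝ → F} (hc : Differentiable ℝ c) (v : E × ℝ) :
    ∂[v] (fun z : E × ℝ => c z.2) = fun z => v.2 • deriv c z.2 := by
  ext z
  have h : HasFDerivAt (fun z : E × ℝ => c z.2) _ z :=
    (hc z.2).hasDerivAt.hasFDerivAt.comp z hasFDerivAt_snd
  simp [dirDeriv, h.fderiv]

lemma dirDeriv_movingFrame (hb : Differentiable ℝ b) (v : X × ℝ) :
    ∂[v] (movingFrame R b) = fun z => R⁻¹ • v.1 - v.2 • deriv b z.2 := by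
  ext z
  have h : HasFDerivAt (movingFrame R b) _ z :=
    ((hasFDerivAt_fst (𝕜 := ℝ)).const_smul R⁻¹).sub
      ((hb z.2).hasDerivAt.hasFDerivAt.comp z hasFDerivAt_snd)
  simp [dirDeriv, h.fderiv]

lemma dirDeriv_gaussianPhase (hψ : Differentiable ℝ ψ) (hb : Differentiable ℝ b) (v : X × ℝ) :
    ∂[v] (gaussianPhase μ R b ψ) = fun z => v.2 * deriv ψ z.2
      + (2 * μ) • ⟪movingFrame R b z, R⁻¹ • v.1 - v.2 • deriv b z.2⟫_ℝ := by
  have hy : Differentiable ℝ (movingFrame R b) := by unfold movingFrame; fun_prop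
  unfold gaussianPhase
  rw [dirDeriv_add (by fun_prop) (by fun_prop), dirDeriv_smul (by fun_prop) (by fun_prop),
    dirDeriv_inner hy hy, dirDeriv_comp_snd hψ, dirDeriv_const, dirDeriv_movingFrame hb]
  ext z
  simp only [real_inner_comm (movingFrame R b z), Pi.zero_apply, smul_eq_mul]
  ring

lemma dirDeriv_dirDeriv_gaussianPhase (hψ : ContDiff ℝ 2 ψ) (hb : ContDiff ℝ 2 b)
    (v w : X × ℝ) (z : X × ℝ) :
    ∂[v] (∂[w] (gaussianPhase μ R b ψ)) z
      = v.2 * w.2 * (deriv (deriv ψ) z.2 - 2 * μ * ⟪movingFrame R b z, deriv (deriv b) z.2⟫_ℝ)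
        + 2 * μ * ⟪R⁻¹ • v.1 - v.2 • deriv b z.2, R⁻¹ • w.1 - w.2 • deriv b z.2⟫_ℝ := by
  have hb' : Differentiable ℝ (deriv b) := hb.differentiable_deriv_two
  have hb₁ : Differentiable ℝ b := hb.differentiable two_ne_zero
  have hy : Differentiable ℝ (movingFrame R b) := by unfold movingFrame; fun_prop
  have h_time : Differentiable ℝ fun s => w.2 * deriv ψ s := by fun_prop
  have h_vel : Differentiable ℝ fun s => R⁻¹ • w.1 - w.2 • deriv b s := by fun_prop
  rw [dirDeriv_gaussianPhase (hψ.differentiable two_ne_zero) hb₁,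
    dirDeriv_add (by fun_prop) (by fun_prop), dirDeriv_comp_snd h_time,
    dirDeriv_smul (by fun_prop) (by fun_prop), dirDeriv_const,
    dirDeriv_inner hy (by fun_prop), dirDeriv_movingFrame hb₁, dirDeriv_comp_snd h_vel]
  simp only [deriv_const_mul_field', deriv_const_sub, deriv_fun_const_smul _ (hb' z.2),
    smul_neg, inner_neg_right, real_inner_smul_right, Pi.zero_apply, smul_eq_mul]
  ring

lemma dirDeriv_space_gaussianPhase (hψ : Differentiable ℝ ψ) (hb : Differentiable ℝ b) (x : X)
    (z : X × ℝ) :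
    ∂[(x, 0)] (gaussianPhase μ R b ψ) z = 2 * μ * R⁻¹ * ⟪x, movingFrame R b z⟫_ℝ := by
  simp [dirDeriv_gaussianPhase hψ hb, real_inner_smul_right, real_inner_comm, mul_assoc]

lemma dirDeriv_space_space_gaussianPhase (hψ : ContDiff ℝ 2 ψ) (hb : ContDiff ℝ 2 b) (x y : X) :
    ∂[(x, 0)] (∂[(y, 0)] (gaussianPhase μ R b ψ)) = fun _ => 2 * μ * (R⁻¹) ^ 2 * ⟪x, y⟫_ℝ := by
  ext z
  simp only [dirDeriv_dirDeriv_gaussianPhase hψ hb, zero_smul, sub_zero, real_inner_smul_left,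
    real_inner_smul_right]
  ring

lemma norm_inv_smul_sub_half_smul_sq (R β : ℝ) (a c : ℂ) :
    ‖R⁻¹ • a - (β / 2) • (Complex.I * c)‖ ^ 2
      = (R⁻¹) ^ 2 * ‖a‖ ^ 2 + R⁻¹ * β * ⟪Complex.I * a, c⟫_ℝ + β ^ 2 / 4 * ‖c‖ ^ 2 := by
  have h_comm : ⟪a, Complex.I * c⟫_ℝ = -⟪Complex.I * a, c⟫_ℝ := by
    rw [real_inner_comm, inner_I_mul_antisymm]
  rw [norm_sub_sq_real, real_inner_smul_left, real_inner_smul_right, h_comm, norm_smul, norm_smul,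
    norm_mul, Complex.norm_I, one_mul, mul_pow, mul_pow, Real.norm_eq_abs, Real.norm_eq_abs,
    sq_abs, sq_abs]
  ring

variable {ι : Type*} [Fintype ι] (o : OrthonormalBasis ι ℝ X)

lemma sum_sum_hessian_gaussianPhase (hψ : ContDiff ℝ 2 ψ) (hb : ContDiff ℝ 2 b)
    (f : X × ℝ → ℂ) (z : X × ℝ) :
    ∑ j, ∑ k, (4 * ∂[(o j, 0)] (∂[(o k, 0)] (gaussianPhase μ R b ψ)) z
          * ⟪∂[(o j, 0)] f z, ∂[(o k, 0)] f z⟫_ℝ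
        + (4 * ∂[(o j, 0)] (gaussianPhase μ R b ψ) z * ∂[(o k, 0)] (gaussianPhase μ R b ψ) z
            * ∂[(o j, 0)] (∂[(o k, 0)] (gaussianPhase μ R b ψ)) z
          - ∂[(o j, 0)] (∂[(o j, 0)] (∂[(o k, 0)] (∂[(o k, 0)] (gaussianPhase μ R b ψ)))) z)
            * ‖f z‖ ^ 2)
      = 8 * μ * (R⁻¹) ^ 2 * ∑ j, ‖∂[(o j, 0)] f z‖ ^ 2
        + 32 * μ ^ 3 * (R⁻¹) ^ 4 * ‖movingFrame R b z‖ ^ 2 * ‖f z‖ ^ 2 := by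
  classical
  have h_fourth (j k : ι) :
      ∂[(o j, 0)] (∂[(o j, 0)] (∂[(o k, 0)] (∂[(o k, 0)] (gaussianPhase μ R b ψ)))) z = 0 := by
    rw [dirDeriv_space_space_gaussianPhase hψ hb, dirDeriv_const]
    exact congrFun (dirDeriv_const _ _) z
  simp only [h_fourth]
  simp only [dirDeriv_space_space_gaussianPhase hψ hb, o.inner_eq_ite, mul_ite, ite_mul,
    dirDeriv_space_gaussianPhase (hψ.differentiable two_ne_zero) (hb.differentiable two_ne_zero),
    mul_zero, mul_one, zero_mul, sub_zero, Finset.sum_add_distrib, Finset.sum_ite_eq,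
    Finset.mem_univ, if_true, real_inner_self_eq_norm_sq,
    ← o.sum_sq_inner_right (movingFrame R b z), Finset.mul_sum, Finset.sum_mul]
  congr 1 <;> exact Finset.sum_congr rfl fun j _ => by ring

lemma sum_norm_inv_smul_sub_half_smul_sq (R : ℝ) (v : X) (a : ι → ℂ) (c : ℂ) :
    ∑ j, ‖R⁻¹ • a j - (⟪o j, v⟫_ℝ / 2) • (Complex.I * c)‖ ^ 2
      = (R⁻¹) ^ 2 * ∑ j, ‖a j‖ ^ 2 + R⁻¹ * ∑ j, ⟪o j, v⟫_ℝ * ⟪Complex.I * a j, c⟫_ℝ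
        + ‖v‖ ^ 2 / 4 * ‖c‖ ^ 2 := by
  simp only [norm_inv_smul_sub_half_smul_sq, Finset.sum_add_distrib, ← o.sum_sq_inner_right v,
    Finset.mul_sum, Finset.sum_div, Finset.sum_mul, mul_assoc]

lemma commutatorForm_gaussianPhase (hψ : ContDiff ℝ 2 ψ) (hb : ContDiff ℝ 2 b) (f : X × ℝ → ℂ)
    (z : X × ℝ) :
    commutatorForm (0, 1) (fun j => (o j, 0)) (gaussianPhase μ R b ψ) f z
      = (deriv (deriv ψ) z.2 - 2 * μ * ⟪movingFrame R b z, deriv (deriv b) z.2⟫_ℝ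
          + 32 * μ ^ 3 * (R⁻¹) ^ 4 * ‖movingFrame R b z‖ ^ 2) * ‖f z‖ ^ 2
        + 8 * μ * ∑ j, ‖R⁻¹ • ∂[(o j, 0)] f z
          - (⟪o j, deriv b z.2⟫_ℝ / 2) • (Complex.I * f z)‖ ^ 2 := by
  have h_time : ∂[(0, 1)] (∂[(0, 1)] (gaussianPhase μ R b ψ)) z = deriv (deriv ψ) z.2
      - 2 * μ * ⟪movingFrame R b z, deriv (deriv b) z.2⟫_ℝ + 2 * μ * ‖deriv b z.2‖ ^ 2 := by
    simp [dirDeriv_dirDeriv_gaussianPhase hψ hb]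
  have h_mixed (j : ι) : ∂[(o j, 0)] (∂[(0, 1)] (gaussianPhase μ R b ψ)) z
      = -(2 * μ * R⁻¹ * ⟪o j, deriv b z.2⟫_ℝ) := by
    simp [dirDeriv_dirDeriv_gaussianPhase hψ hb, real_inner_smul_left, mul_assoc]
  have h_cross : ∑ j, 4 * ∂[(o j, 0)] (∂[(0, 1)] (gaussianPhase μ R b ψ)) z
        * ⟪Complex.I * ∂[(o j, 0)] f z, f z⟫_ℝ
      = -(8 * μ * R⁻¹)
        * ∑ j, ⟪o j, deriv b z.2⟫_ℝ * ⟪Complex.I * ∂[(o j, 0)] f z, f z⟫_ℝ := by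
    rw [Finset.mul_sum]
    exact Finset.sum_congr rfl fun j _ => by rw [h_mixed]; ring
  rw [commutatorForm, h_time, h_cross, sum_sum_hessian_gaussianPhase o hψ hb,
    sum_norm_inv_smul_sub_half_smul_sq]
  ring

lemma mul_norm_sq_le_commutatorForm_gaussianPhase (hμ : 0 < μ) (hR : R ≠ 0) (hψ : ContDiff ℝ 2 ψ)
    (hb : ContDiff ℝ 2 b) (f : X × ℝ → ℂ) (z : X × ℝ) :
    (deriv (deriv ψ) z.2 - R ^ 4 / (32 * μ) * ‖deriv (deriv b) z.2‖ ^ 2) * ‖f z‖ ^ 2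
      ≤ commutatorForm (0, 1) (fun j => (o j, 0)) (gaussianPhase μ R b ψ) f z := by
  set y := movingFrame R b z
  set b'' := deriv (deriv b) z.2
  have h_square : 32 * μ ^ 3 * (R⁻¹) ^ 4 * ‖y‖ ^ 2 - 2 * μ * ⟪y, b''⟫_ℝ
      + R ^ 4 / (32 * μ) * ‖b''‖ ^ 2
        = (32 * μ)⁻¹ * ‖(32 * μ ^ 2 * (R⁻¹) ^ 2) • y - R ^ 2 • b''‖ ^ 2 := by
    rw [norm_sub_sq_real, real_inner_smul_left, real_inner_smul_right, norm_smul, norm_smul,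
      mul_pow, mul_pow, Real.norm_eq_abs, Real.norm_eq_abs, sq_abs, sq_abs]
    field_simp
  rw [commutatorForm_gaussianPhase o hψ hb]
  refine le_add_of_le_of_nonneg ?_ (by positivity)
  have : 0 ≤ (32 * μ)⁻¹ * ‖(32 * μ ^ 2 * (R⁻¹) ^ 2) • y - R ^ 2 • b''‖ ^ 2 := by positivity
  gcongr
  linarith

lemma norm_exp_gaussianPhase_smul_sq (z : X × ℝ) (c : ℂ) :
    ‖Real.exp (gaussianPhase μ R b ψ z) • c‖ ^ 2
      = Real.exp (2 * ψ z.2) * Real.exp (2 * μ * ‖R⁻¹ • z.1 - b z.2‖ ^ 2) * ‖c‖ ^ 2 := by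
  rw [norm_smul, mul_pow, Real.norm_eq_abs, Real.abs_exp, ← Real.exp_nat_mul, ← Real.exp_add,
    gaussianPhase, real_inner_self_eq_norm_sq, movingFrame, smul_eq_mul]
  ring_nf

section Integral

variable [MeasurableSpace X] [BorelSpace X] (ν : Measure (X × ℝ)) {g : X × ℝ → ℂ}

lemma integrable_mul_norm_exp_gaussianPhase_smul_sq [IsFiniteMeasureOnCompacts ν]
    (hψ : ContDiff ℝ ∞ ψ) (hb : ContDiff ℝ ∞ b) (hg : Continuous g)
    (hg_supp : HasCompactSupport g) :
    Integrable (fun z => (deriv (deriv ψ) z.2 - R ^ 4 / (32 * μ) * ‖deriv (deriv b) z.2‖ ^ 2)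
      * ‖Real.exp (gaussianPhase μ R b ψ z) • g z‖ ^ 2) ν := by
  have hθ : ContDiff ℝ ∞ (gaussianPhase μ R b ψ) := contDiff_gaussianPhase hψ hb
  have hψ'' : Continuous (deriv (deriv ψ)) := (hψ.iterate_deriv 2).continuous
  have hb'' : Continuous (deriv (deriv b)) := (hb.iterate_deriv 2).continuous
  refine Continuous.integrable_of_hasCompactSupport (by fun_prop) (.intro hg_supp fun z hz => ?_)
  simp [image_eq_zero_of_notMem_tsupport hz]

theorem integral_mul_norm_exp_gaussianPhase_smul_sq_le [FiniteDimensional ℝ X]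
    [ν.IsAddHaarMeasure] (hμ : 0 < μ) (hR : R ≠ 0) (hψ : ContDiff ℝ ∞ ψ) (hb : ContDiff ℝ ∞ b)
    (hg : ContDiff ℝ ∞ g) (hg_supp : HasCompactSupport g) :
    ∫ z, (deriv (deriv ψ) z.2 - R ^ 4 / (32 * μ) * ‖deriv (deriv b) z.2‖ ^ 2)
        * ‖Real.exp (gaussianPhase μ R b ψ z) • g z‖ ^ 2 ∂ν
      ≤ ∫ z, ‖Real.exp (gaussianPhase μ R b ψ z)
        • schrodinger (0, 1) (fun j => (o j, 0)) g z‖ ^ 2 ∂ν := by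
  have hθ : ContDiff ℝ ∞ (gaussianPhase μ R b ψ) := contDiff_gaussianPhase hψ hb
  set f : X × ℝ → ℂ := fun z => Real.exp (gaussianPhase μ R b ψ z) • g z
  have hf : ContDiff ℝ ∞ f := by unfold f; fun_prop
  have hf_supp : HasCompactSupport f :=
    hg_supp.smul_left (f := fun z => Real.exp (gaussianPhase μ R b ψ z))
  calc
    _ ≤ ∫ z, commutatorForm (0, 1) (fun j => (o j, 0)) (gaussianPhase μ R b ψ) f z ∂ν :=
      integral_mono
        (integrable_mul_norm_exp_gaussianPhase_smul_sq ν hψ hb hg.continuous hg_supp)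
        (integrable_commutatorForm _ _ ν hθ hf hf_supp) fun z =>
          mul_norm_sq_le_commutatorForm_gaussianPhase o hμ hR (contDiff_infty.1 hψ 2)
            (contDiff_infty.1 hb 2) f z
    _ ≤ _ := integral_commutatorForm_le _ _ ν hθ hg hg_supp

end Integral

end MovingGaussian

/-! ### Time slices -/

lemma deriv_slice {g : E × ℝ → F} (hg : Differentiable ℝ g) (x : E) (t : ℝ) :
    deriv (fun s => g (x, s)) t = ∂[(0, 1)] g (x, t) :=
  ((hg (x, t)).hasFDerivAt.comp_hasDerivAt t
    ((hasDerivAt_const t x).prodMk (hasDerivAt_id t))).deriv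

lemma dirDeriv_slice {g : E × ℝ → F} (hg : Differentiable ℝ g) (v : E) (t : ℝ) :
    ∂[v] (fun x => g (x, t)) = fun x => ∂[(v, 0)] g (x, t) := by
  ext x
  have h : HasFDerivAt (fun x => g (x, t)) _ x :=
    HasFDerivAt.comp (g := g) x (hg (x, t)).hasFDerivAt (hasFDerivAt_prodMk_left x t)
  simp [dirDeriv, h.fderiv]

section Laplacian

variable {X ι : Type*} [NormedAddCommGroup X] [InnerProductSpace ℝ X] [FiniteDimensional ℝ X]
  [Fintype ι] (o : OrthonormalBasis ι ℝ X)

lemma laplacian_eq_sum_dirDeriv {f : X → F} (hf : ContDiff ℝ 2 f) (x : X) :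
    Δ f x = ∑ j, ∂[o j] (∂[o j] f) x := by
  simp [laplacian_eq_iteratedFDeriv_orthonormalBasis f o, iteratedFDeriv_two_apply,
    dirDeriv_dirDeriv hf]

lemma lapl_eq_laplacian {n : ℕ} {f : EuclideanSpace ℝ (Fin n) → ℂ} (hf : ContDiff ℝ 2 f) :
    lapl f = Δ f := by
  ext x
  simp only [laplacian_eq_sum_dirDeriv (EuclideanSpace.basisFun (Fin n) ℝ) hf,
    EuclideanSpace.basisFun_apply]
  rfl

lemma schrodinger_eq_deriv_add_laplacian {g : X × ℝ → ℂ} (hg : ContDiff ℝ ∞ g) (x : X) (t : ℝ) :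
    schrodinger (0, 1) (fun j => (o j, 0)) g (x, t)
      = Complex.I * deriv (fun s => g (x, s)) t + Δ (fun y => g (y, t)) x := by
  have h_slice : ContDiff ℝ 2 fun y => g (y, t) := (contDiff_infty.1 hg 2).comp (by fun_prop)
  rw [schrodinger, deriv_slice (by fun_prop), laplacian_eq_sum_dirDeriv o h_slice]
  congr 1
  refine Finset.sum_congr rfl fun j _ => ?_
  rw [dirDeriv_slice (by fun_prop), dirDeriv_slice (by fun_prop)]

end Laplacian

lemma deriv_deriv_smul_const {c : ℝ → ℝ} (hc : ContDiff ℝ 2 c) (v : F) :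
    deriv (deriv fun t => c t • v) = fun t => deriv (deriv c) t • v := by
  have h_fst : deriv (fun t => c t • v) = fun t => deriv c t • v :=
    funext fun t => deriv_smul_const (hc.differentiable two_ne_zero t) v
  rw [h_fst]
  exact funext fun t => deriv_smul_const (hc.differentiable_deriv_two t) v

lemma setIntegral_integral_eq_integral_prod {α β : Type*} [MeasurableSpace α] [MeasurableSpace β]
    {κ : Measure α} {ν : Measure β} [SFinite κ] [SFinite ν] {G : α × β → F}
    (hG : Integrable G (κ.prod ν)) {s : Set β} (hGs : ∀ z, z.2 ∉ s → G z = 0) :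
    ∫ y in s, ∫ x, G (x, y) ∂κ ∂ν = ∫ z, G z ∂κ.prod ν := by
  rw [integral_prod_symm _ hG]
  exact setIntegral_eq_integral_of_forall_compl_eq_zero fun y hy => by simp [fun x => hGs (x, y) hy]

end DirDeriv

theorem carleman_moving_gaussian_general {X : Type*} [NormedAddCommGroup X]
    [InnerProductSpace ℝ X] [FiniteDimensional ℝ X] [MeasurableSpace X] [BorelSpace X]
    {μ R : ℝ} (hμ : 0 < μ) (hR : R ≠ 0) {b : ℝ → X} {ψ : ℝ → ℝ} (hb : ContDiff ℝ ∞ b)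
    (hψ : ContDiff ℝ ∞ ψ) {g : X × ℝ → ℂ} (hg : ContDiff ℝ ∞ g) (hg_supp : HasCompactSupport g)
    {I : Set ℝ} (hgI : tsupport g ⊆ univ ×ˢ I) :
    (∫ t in I, ∫ x : X,
      (deriv (deriv ψ) t - R ^ 4 / (32 * μ) * ‖deriv (deriv b) t‖ ^ 2) * Real.exp (2 * ψ t)
        * Real.exp (2 * μ * ‖R⁻¹ • x - b t‖ ^ 2) * ‖g (x, t)‖ ^ 2)
      ≤ ∫ t in I, ∫ x : X, Real.exp (2 * ψ t) * Real.exp (2 * μ * ‖R⁻¹ • x - b t‖ ^ 2)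
        * ‖Complex.I * deriv (fun s => g (x, s)) t + Δ (fun y => g (y, t)) x‖ ^ 2 := by
  let o := stdOrthonormalBasis ℝ X
  have hθ : ContDiff ℝ ∞ (gaussianPhase μ R b ψ) := contDiff_gaussianPhase hψ hb
  have h_lhs := setIntegral_integral_eq_integral_prod (s := I)
    (integrable_mul_norm_exp_gaussianPhase_smul_sq (μ := μ) (R := R) (volume.prod volume) hψ hb
      hg.continuous hg_supp)
    fun z hz => by simp [image_eq_zero_of_notMem_tsupport fun h => hz (hgI h).2]
  have h_rhs := setIntegral_integral_eq_integral_prod (s := I)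
    (integrable_norm_exp_smul_schrodinger_sq (0, 1) (fun j => (o j, 0)) (volume.prod volume) hθ hg
      hg_supp)
    fun z hz => by simp [schrodinger_eq_zero_of_notMem_tsupport _ _ fun h => hz (hgI h).2]
  have h := integral_mul_norm_exp_gaussianPhase_smul_sq_le o (volume.prod volume) hμ hR hψ hb hg
    hg_supp
  rw [← h_lhs, ← h_rhs] at h
  simpa only [norm_exp_gaussianPhase_smul_sq, schrodinger_eq_deriv_add_laplacian o hg, mul_assoc]
    using h

/-- **Carleman inequality with moving Gaussian weight
(Escauriaza–Kenig–Ponce–Vega).** For smooth `φ, ψ : [0,1] → ℝ`, `μ > 0` and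
`g ∈ C₀^∞(ℝⁿ × (0,1))`, for all sufficiently large `R`,
`∫∫ [ψ'' − (R⁴/32μ)(φ'')²] e^{2ψ} e^{2μ|x/R − φ(t)e₁|²}|g|²
  ≤ ∫∫ e^{2ψ} e^{2μ|x/R − φ(t)e₁|²} |(i∂ₜ + Δ)g|²`. -/
theorem carleman_moving_gaussian (n : ℕ) (μ : ℝ) (hμ : 0 < μ)
    (φ ψ : ℝ → ℝ) (hφ : ContDiff ℝ (⊤ : ℕ∞) φ) (hψ : ContDiff ℝ (⊤ : ℕ∞) ψ)
    (g : EuclideanSpace ℝ (Fin (n + 1)) × ℝ → ℂ)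
    (hg : ContDiff ℝ (⊤ : ℕ∞) g) (hgsupp : HasCompactSupport g)
    (hgt : tsupport g ⊆ univ ×ˢ Ioo (0:ℝ) 1) :
    ∃ R₀ > (0:ℝ), ∀ R : ℝ, R₀ ≤ R →
      (∫ t in Icc (0:ℝ) 1, ∫ x : EuclideanSpace ℝ (Fin (n + 1)),
        (deriv (deriv ψ) t - R ^ 4 / (32 * μ) * deriv (deriv φ) t ^ 2) *
          Real.exp (2 * ψ t) *
          Real.exp (2 * μ *
            ‖R⁻¹ • x - φ t • EuclideanSpace.single (0 : Fin (n + 1)) (1:ℝ)‖ ^ 2) *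
          ‖g (x, t)‖ ^ 2) ≤
      ∫ t in Icc (0:ℝ) 1, ∫ x : EuclideanSpace ℝ (Fin (n + 1)),
        Real.exp (2 * ψ t) *
          Real.exp (2 * μ *
            ‖R⁻¹ • x - φ t • EuclideanSpace.single (0 : Fin (n + 1)) (1:ℝ)‖ ^ 2) *
          ‖Complex.I * deriv (fun s => g (x, s)) t + lapl (fun y => g (y, t)) x‖ ^ 2 := by
  refine ⟨1, one_pos, fun R hR => ?_⟩
  have h_slice (t : ℝ) : ContDiff ℝ 2 fun y => g (y, t) :=
    (contDiff_infty.1 hg 2).comp (by fun_prop)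
  have h_acceleration (t : ℝ) :
      ‖deriv (deriv fun t => φ t • EuclideanSpace.single (0 : Fin (n + 1)) (1 : ℝ)) t‖ ^ 2
        = deriv (deriv φ) t ^ 2 := by
    simp [deriv_deriv_smul_const (contDiff_infty.1 hφ 2), norm_smul]
  simp only [lapl_eq_laplacian (h_slice _), ← h_acceleration]
  exact carleman_moving_gaussian_general hμ (one_pos.trans_le hR).ne' (by fun_prop) hψ hg hgsupp
    (hgt.trans (prod_mono_right Ioo_subset_Icc_self))
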